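/- Let 2/3 < γ ≤ 1, m = (4−3γ)/2, β = (1−V²)^((2−γ)/2)/G₊, and define R₁ = β·Ω/(σ₁^m · (1−mΣ₊)^(2(1−m))). Along any solution of the reduced tilted Bianchi type VIII system with Ω > 0, V² < 1, σ₁ > 0, η ≥ 0 and 1−mΣ₊ > 0 for all τ, R₁ is differentiable and satisfies R₁' = (2/(1−mΣ₊))·[(Σ₊−m)² + 3(1−γ)(1−m)η + m(1−m)(2−m)·v₂²·Ω/G₊]·R₁; in particular R₁ is monotonically non-decreasing. -/

import Mathlib

noncomputable section

/-- State of the reduced tilted Bianchi type VIII system: real variables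
`Sp` (= Σ₊), `σ1`, `η`, `M`, `Om` (= Ω), `v1`, `v2`, functions of τ. -/
structure ReducedVIII (γ : ℝ) (I : Set ℝ) where
  Sp : ℝ → ℝ
  σ1 : ℝ → ℝ
  η : ℝ → ℝ
  M : ℝ → ℝ
  Om : ℝ → ℝ
  v1 : ℝ → ℝ
  v2 : ℝ → ℝ

namespace ReducedVIII

variable {γ : ℝ} {I : Set ℝ}

/-- V² = v₁² + v₂² -/
def V2 (S : ReducedVIII γ I) (τ : ℝ) : ℝ := S.v1 τ ^ 2 + S.v2 τ ^ 2

/-- G₊ = 1 + (γ−1)V² -/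
def Gp (S : ReducedVIII γ I) (τ : ℝ) : ℝ := 1 + (γ - 1) * S.V2 τ

/-- Q = 2Σ₊² + σ₁ + (1/2)((3γ−2)+(2−γ)V²)Ω/G₊ -/
def Q (S : ReducedVIII γ I) (τ : ℝ) : ℝ :=
  2 * S.Sp τ ^ 2 + S.σ1 τ + (1/2) * ((3*γ - 2) + (2 - γ) * S.V2 τ) * S.Om τ / S.Gp τ

/-- W = V²𝒮 = (−2v₁² + v₂²)Σ₊ -/
def W (S : ReducedVIII γ I) (τ : ℝ) : ℝ := (-2 * S.v1 τ ^ 2 + S.v2 τ ^ 2) * S.Sp τ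

/-- T = ((3γ−4)(1−V²) + (2−γ)W)/(1−(γ−1)V²) -/
def T (S : ReducedVIII γ I) (τ : ℝ) : ℝ :=
  ((3*γ - 4) * (1 - S.V2 τ) + (2 - γ) * S.W τ) / (1 - (γ - 1) * S.V2 τ)

/-- The evolution equations and the constraint of the reduced system, holding
at each τ in the interval `I`. -/
structure IsSolution (S : ReducedVIII γ I) : Prop where
  hSp : ∀ τ ∈ I, HasDerivAt S.Sp
    ((S.Q τ - 2) * S.Sp τ + S.η τ - S.σ1 τ
      + γ * S.Om τ / (2 * S.Gp τ) * (-2 * S.v1 τ ^ 2 + S.v2 τ ^ 2)) τ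
  hσ1 : ∀ τ ∈ I, HasDerivAt S.σ1 (2 * (S.Q τ + S.Sp τ - 1) * S.σ1 τ) τ
  hη : ∀ τ ∈ I, HasDerivAt S.η (2 * (S.Q τ - S.Sp τ) * S.η τ) τ
  hM : ∀ τ ∈ I, HasDerivAt S.M (-(S.Q τ + 2 * S.Sp τ) * S.M τ) τ
  hOm : ∀ τ ∈ I, HasDerivAt S.Om
    (S.Om τ / S.Gp τ * (2 * S.Q τ - (3*γ - 2)
      + (2 * S.Q τ * (γ - 1) - (2 - γ)) * S.V2 τ - γ * S.W τ)) τ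
  hv1 : ∀ τ ∈ I, HasDerivAt S.v1 ((S.T τ + 2 * S.Sp τ) * S.v1 τ) τ
  hv2 : ∀ τ ∈ I, HasDerivAt S.v2 ((S.T τ - S.Sp τ) * S.v2 τ) τ
  hC : ∀ τ ∈ I, 1 = S.Sp τ ^ 2 + S.σ1 τ + S.η τ + S.Om τ

end ReducedVIII

/-- R₁ = β·Ω/(σ₁^m · (1−mΣ₊)^(2(1−m))), with m = (4−3γ)/2 and
β = (1−V²)^((2−γ)/2)/G₊. -/
noncomputable def R1 {γ : ℝ} {I : Set ℝ} (S : ReducedVIII γ I) (τ : ℝ) : ℝ :=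
  (1 - S.V2 τ) ^ ((2 - γ)/2) / S.Gp τ * S.Om τ /
    (S.σ1 τ ^ ((4 - 3*γ)/2) * (1 - (4 - 3*γ)/2 * S.Sp τ) ^ (2 * (1 - (4 - 3*γ)/2)))

theorem ldR_rpow {f : ℝ → ℝ} {l x : ℝ} (p : ℝ) (hf : HasDerivAt f (l * f x) x) (h0 : 0 < f x) :
    HasDerivAt (fun t => f t ^ p) (p * l * f x ^ p) x := by
  have h := hf.rpow_const (p := p) (Or.inl h0.ne')
  convert h using 1
  rw [Real.rpow_sub_one h0.ne']
  field_simp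

theorem ldR_mul {f g : ℝ → ℝ} {a b x : ℝ} (hf : HasDerivAt f (a * f x) x)
    (hg : HasDerivAt g (b * g x) x) :
    HasDerivAt (fun t => f t * g t) ((a + b) * (f x * g x)) x := by
  refine HasDerivAt.congr_deriv (hf.mul hg) ?_
  ring

theorem ldR_div {f g : ℝ → ℝ} {a b x : ℝ} (hf : HasDerivAt f (a * f x) x)
    (hg : HasDerivAt g (b * g x) x) (h0 : g x ≠ 0) :
    HasDerivAt (fun t => f t / g t) ((a - b) * (f x / g x)) x := by
  refine HasDerivAt.congr_deriv (hf.div hg h0) ?_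
  field_simp

theorem ldR_alg1 {γ V W G D T : ℝ} (hG : G = 1 + (γ - 1) * V) (hD : D = 1 - (γ - 1) * V)
    (hG0 : G ≠ 0) (hD0 : D ≠ 0) (hV0 : 1 - V ≠ 0)
    (hT : T = ((3*γ - 4) * (1 - V) + (2 - γ) * W) / D) (Q : ℝ) :
    (2 - γ)/2 * (-(2 * (T * V - W)) / (1 - V)) - (γ - 1) * (2 * (T * V - W)) / G
      + (2 * Q - (3*γ - 2) + (2 * Q * (γ - 1) - (2 - γ)) * V - γ * W) / G
      = 2 * Q - (3*γ - 2) := by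
  have h1 : T * V - W = ((3*γ - 4) * V - W) * (1 - V) / D := by
    rw [hT]; field_simp; rw [hD]; ring
  have h2 : (2 - γ)/2 * (-(2 * (T * V - W)) / (1 - V)) - (γ - 1) * (2 * (T * V - W)) / G
      = -γ * ((3*γ - 4) * V - W) / G := by
    rw [h1]; field_simp; rw [hG, hD]; ring
  rw [h2, ← add_div, div_eq_iff hG0, hG]; ring

theorem ldR_alg2 {γ m S s e O a b G Q : ℝ} (hm : γ = (4 - 2 * m) / 3)
    (hG : G = 1 + (γ - 1) * (a ^ 2 + b ^ 2)) (hG0 : G ≠ 0) (hmS : 1 - m * S ≠ 0)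
    (hC : 1 = S ^ 2 + s + e + O)
    (hQ : Q = 2 * S ^ 2 + s + (1/2) * ((3*γ - 2) + (2 - γ) * (a ^ 2 + b ^ 2)) * O / G) :
    2 * Q - (3*γ - 2) - (m * (2 * (Q + S - 1)) + 2 * (1 - m) *
      (-(m * ((Q - 2) * S + e - s + γ * O / (2 * G) * (-2 * a ^ 2 + b ^ 2))) / (1 - m * S)))
    = 2 / (1 - m * S) * ((S - m) ^ 2 + 3 * (1 - γ) * (1 - m) * e
          + m * (1 - m) * (2 - m) * b ^ 2 * O / G) := by
  obtain ⟨P, hP⟩ : ∃ P, P = O / G := ⟨_, rfl⟩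
  have hO : O = P * G := by rw [hP]; field_simp
  have e1 : (1/2) * ((3*γ - 2) + (2 - γ) * (a ^ 2 + b ^ 2)) * O / G
      = (1/2) * ((3*γ - 2) + (2 - γ) * (a ^ 2 + b ^ 2)) * P := by rw [hP]; ring
  have e2 : γ * O / (2 * G) = γ * P / 2 := by rw [hP]; field_simp
  have e3 : m * (1 - m) * (2 - m) * b ^ 2 * O / G = m * (1 - m) * (2 - m) * b ^ 2 * P := by
    rw [hP]; ring
  rw [e1] at hQ
  rw [e2, e3]
  have hs : s = 1 - S ^ 2 - e - P * G := by rw [← hO]; linarith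
  field_simp
  rw [hQ, hs, hG, hm]
  ring

/-- For 2/3 < γ ≤ 1 and m = (4−3γ)/2, along any solution of the
reduced system with Ω > 0, V² < 1, σ₁ > 0, η ≥ 0 and 1−mΣ₊ > 0, R₁ is
differentiable with
R₁' = (2/(1−mΣ₊))·[(Σ₊−m)² + 3(1−γ)(1−m)η + m(1−m)(2−m)v₂²Ω/G₊]·R₁;
in particular R₁ is monotonically non-decreasing. -/
theorem reducedVIII_R1_monotone (γ : ℝ) (hγ1 : 2/3 < γ) (hγ2 : γ ≤ 1)
    (τ₀ : ℝ) (S : ReducedVIII γ (Set.Ici τ₀)) (hsol : S.IsSolution)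
    (hOm : ∀ τ ∈ Set.Ici τ₀, 0 < S.Om τ)
    (hV : ∀ τ ∈ Set.Ici τ₀, S.V2 τ < 1)
    (hσ : ∀ τ ∈ Set.Ici τ₀, 0 < S.σ1 τ)
    (hη : ∀ τ ∈ Set.Ici τ₀, 0 ≤ S.η τ)
    (hmSig : ∀ τ ∈ Set.Ici τ₀, 0 < 1 - (4 - 3*γ)/2 * S.Sp τ) :
    (∀ τ ∈ Set.Ici τ₀, HasDerivAt (R1 S)
      (2 / (1 - (4 - 3*γ)/2 * S.Sp τ)
        * ((S.Sp τ - (4 - 3*γ)/2) ^ 2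
          + 3 * (1 - γ) * (1 - (4 - 3*γ)/2) * S.η τ
          + (4 - 3*γ)/2 * (1 - (4 - 3*γ)/2) * (2 - (4 - 3*γ)/2)
            * S.v2 τ ^ 2 * S.Om τ / S.Gp τ)
        * R1 S τ) τ) ∧
    MonotoneOn (R1 S) (Set.Ici τ₀) := by
  have hV0 : ∀ τ, 0 ≤ S.V2 τ := fun τ => by unfold ReducedVIII.V2; positivity
  have hG : ∀ τ ∈ Set.Ici τ₀, 0 < S.Gp τ := fun τ hτ => by
    have := hV τ hτ
    have := hV0 τ
    unfold ReducedVIII.Gp; nlinarith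
  have key : ∀ τ ∈ Set.Ici τ₀, HasDerivAt (R1 S)
      (2 / (1 - (4 - 3*γ)/2 * S.Sp τ)
        * ((S.Sp τ - (4 - 3*γ)/2) ^ 2
          + 3 * (1 - γ) * (1 - (4 - 3*γ)/2) * S.η τ
          + (4 - 3*γ)/2 * (1 - (4 - 3*γ)/2) * (2 - (4 - 3*γ)/2)
            * S.v2 τ ^ 2 * S.Om τ / S.Gp τ)
        * R1 S τ) τ := by
    intro τ hτ
    have hGt := hG τ hτ
    have hVt := hV τ hτ
    have hmt := hmSig τ hτ
    have hst := hσ τ hτ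
    have h1V : 0 < 1 - S.V2 τ := by linarith
    have hD : 0 < 1 - (γ - 1) * S.V2 τ := by nlinarith [hV0 τ]
    have dV : HasDerivAt S.V2 (2 * (S.T τ * S.V2 τ - S.W τ)) τ := by
      have h := ((hsol.hv1 τ hτ).pow 2).add ((hsol.hv2 τ hτ).pow 2)
      refine HasDerivAt.congr_deriv h ?_
      simp only [ReducedVIII.V2, ReducedVIII.W]
      push_cast
      ring
    have d1V : HasDerivAt (fun t => 1 - S.V2 t)
        ((-(2 * (S.T τ * S.V2 τ - S.W τ)) / (1 - S.V2 τ)) * (1 - S.V2 τ)) τ := by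
      rw [div_mul_cancel₀ _ h1V.ne']
      exact dV.const_sub 1
    have dG : HasDerivAt S.Gp (((γ - 1) * (2 * (S.T τ * S.V2 τ - S.W τ)) / S.Gp τ) * S.Gp τ) τ := by
      rw [div_mul_cancel₀ _ hGt.ne']
      exact (dV.const_mul (γ - 1)).const_add 1
    have dO : HasDerivAt S.Om (((2 * S.Q τ - (3*γ - 2)
      + (2 * S.Q τ * (γ - 1) - (2 - γ)) * S.V2 τ - γ * S.W τ) / S.Gp τ) * S.Om τ) τ := by
      convert hsol.hOm τ hτ using 1
      ring
    have dm : HasDerivAt (fun t => 1 - (4 - 3*γ)/2 * S.Sp t)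
        ((-((4 - 3*γ)/2 * ((S.Q τ - 2) * S.Sp τ + S.η τ - S.σ1 τ
      + γ * S.Om τ / (2 * S.Gp τ) * (-2 * S.v1 τ ^ 2 + S.v2 τ ^ 2)))
          / (1 - (4 - 3*γ)/2 * S.Sp τ)) * (1 - (4 - 3*γ)/2 * S.Sp τ)) τ := by
      rw [div_mul_cancel₀ _ hmt.ne']
      exact ((hsol.hSp τ hτ).const_mul _).const_sub 1
    have hR := ldR_div (ldR_mul (ldR_div (ldR_rpow ((2 - γ)/2) d1V h1V) dG hGt.ne') dO)
      (ldR_mul (ldR_rpow ((4 - 3*γ)/2) (hsol.hσ1 τ hτ) hst)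
        (ldR_rpow (2 * (1 - (4 - 3*γ)/2)) dm hmt))
      (mul_pos (Real.rpow_pos_of_pos hst _) (Real.rpow_pos_of_pos hmt _)).ne'
    have a1 := ldR_alg1 (γ := γ) (V := S.V2 τ) (W := S.W τ) (G := S.Gp τ) rfl rfl hGt.ne' hD.ne'
      h1V.ne' (T := S.T τ) rfl (S.Q τ)
    have a2 := ldR_alg2 (γ := γ) (m := (4 - 3*γ)/2) (S := S.Sp τ) (s := S.σ1 τ) (e := S.η τ)
      (O := S.Om τ) (a := S.v1 τ) (b := S.v2 τ) (G := S.Gp τ) (Q := S.Q τ) (by ring) rfl hGt.ne'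
      hmt.ne' (hsol.hC τ hτ) rfl
    rw [a1, a2] at hR
    exact hR
  refine ⟨key, ?_⟩
  refine monotoneOn_of_deriv_nonneg (convex_Ici τ₀)
    (fun τ hτ => (key τ hτ).continuousAt.continuousWithinAt)
    (fun τ hτ => (key τ (interior_subset hτ)).differentiableAt.differentiableWithinAt) ?_
  intro τ hτ'
  have hτ := interior_subset hτ'
  rw [(key τ hτ).deriv]
  have hGt := hG τ hτ
  have hVt := hV τ hτ
  have hmt := hmSig τ hτ
  have hst := hσ τ hτ
  have hOt := hOm τ hτ
  have het := hη τ hτ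
  have h1V : 0 < 1 - S.V2 τ := by linarith
  have m0 : 0 ≤ (4 - 3*γ)/2 := by linarith
  have m1 : 0 ≤ 1 - (4 - 3*γ)/2 := by linarith
  have m2 : 0 ≤ 2 - (4 - 3*γ)/2 := by linarith
  have g1 : 0 ≤ 1 - γ := by linarith
  have hR : 0 ≤ R1 S τ := by
    unfold R1
    exact div_nonneg (mul_nonneg (div_nonneg (Real.rpow_nonneg h1V.le _) hGt.le) hOt.le)
      (mul_nonneg (Real.rpow_nonneg hst.le _) (Real.rpow_nonneg hmt.le _))
  have t1 : 0 ≤ 3 * (1 - γ) * (1 - (4 - 3*γ)/2) * S.η τ :=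
    mul_nonneg (mul_nonneg (by linarith) m1) het
  have t2 : 0 ≤ (4 - 3*γ)/2 * (1 - (4 - 3*γ)/2) * (2 - (4 - 3*γ)/2)
            * S.v2 τ ^ 2 * S.Om τ / S.Gp τ :=
    div_nonneg (mul_nonneg (mul_nonneg (mul_nonneg (mul_nonneg m0 m1) m2) (sq_nonneg _)) hOt.le)
      hGt.le
  exact mul_nonneg (mul_nonneg (div_nonneg (by norm_num) hmt.le)
    (add_nonneg (add_nonneg (sq_nonneg _) t1) t2)) hR
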